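/- Let n ≥ 1, −1/n < α < 0 (so β = −1/α > n), κ = α/(1 + nα), and let f ∈ C_α(ℝⁿ) be Lebesgue integrable with ∫f > 0. Then the α-mean width satisfies w_α(f) ≥ (∫ G_α) · [ n/2 + (1/κ)·( (∫f / ∫G_α)^κ − 1 ) ] (note κ < 0). -/

import Mathlib

open scoped RealInnerProductSpace Topology ENNReal
open MeasureTheory Filter

noncomputable section

/-- `f : ℝⁿ → [0,∞)` is `α`-concave: its support is convex and `f` satisfies the
`α`-mean inequality on its support. -/
def AlphaConcave (n : ℕ) (α : ℝ) (f : EuclideanSpace ℝ (Fin n) → ℝ) : Prop :=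
  Convex ℝ {x | f x ≠ 0} ∧
  ∀ x y : EuclideanSpace ℝ (Fin n), f x ≠ 0 → f y ≠ 0 → ∀ l : ℝ, 0 ≤ l → l ≤ 1 →
    (l * f x ^ α + (1 - l) * f y ^ α) ^ (1 / α) ≤ f (l • x + (1 - l) • y)

/-- `C_α(ℝⁿ)`: upper semicontinuous `α`-concave functions `f : ℝⁿ → [0,∞)`
with `f` not identically `0`. -/
def CAlpha (n : ℕ) (α : ℝ) : Set (EuclideanSpace ℝ (Fin n) → ℝ) :=
  {f | (∀ x, 0 ≤ f x) ∧ UpperSemicontinuous f ∧ (∃ x, f x ≠ 0) ∧ AlphaConcave n α f}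

/-- The convex base `base_α f = (1 - f^α)/α = β·(f^{-1/β} - 1)` (with `α = -1/β`),
taking the value `∞` where `f = 0`. -/
def convexBase {n : ℕ} (β : ℝ) (f : EuclideanSpace ℝ (Fin n) → ℝ) :
    EuclideanSpace ℝ (Fin n) → EReal :=
  fun x => if f x = 0 then ⊤ else ((β * (f x ^ (-1 / β) - 1) : ℝ) : EReal)

/-- The `α`-concave function with the given convex base: `f = (1 + φ/β)^{-β}`. -/
def ofBase {n : ℕ} (β : ℝ) (φ : EuclideanSpace ℝ (Fin n) → EReal) :
    EuclideanSpace ℝ (Fin n) → ℝ :=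
  fun x => if φ x = ⊤ then 0 else (1 + (φ x).toReal / β) ^ (-β)

/-- Inf-convolution: `(φ □ ψ)(x) = inf_{y+z=x} [φ(y) + ψ(z)]`. -/
def infConv {n : ℕ} (φ ψ : EuclideanSpace ℝ (Fin n) → EReal) :
    EuclideanSpace ℝ (Fin n) → EReal :=
  fun x => ⨅ y : EuclideanSpace ℝ (Fin n), φ y + ψ (x - y)

/-- The base of the `λ`-homothety: `x ↦ λ·φ(x/λ)`. -/
def scaleBase {n : ℕ} (l : ℝ) (φ : EuclideanSpace ℝ (Fin n) → EReal) :
    EuclideanSpace ℝ (Fin n) → EReal :=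
  fun x => (l : EReal) * φ (l⁻¹ • x)

/-- `base_α G_α`, i.e. the function `x ↦ |x|²/2`. -/
def gaussBase (n : ℕ) : EuclideanSpace ℝ (Fin n) → EReal :=
  fun x => ((‖x‖ ^ 2 / 2 : ℝ) : EReal)

/-- The Legendre transform `φ*(y) = sup_x (⟨x,y⟩ - φ(x))`. -/
def legendre {n : ℕ} (φ : EuclideanSpace ℝ (Fin n) → EReal) :
    EuclideanSpace ℝ (Fin n) → EReal :=
  fun y => ⨆ x : EuclideanSpace ℝ (Fin n), (((⟪x, y⟫ : ℝ) : EReal) - φ x)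

/-- The `α`-mean `[l·u^α + (1-l)·v^α]^{1/α}` with the conventions `0^α = +∞`,
`(+∞)^{1/α} = 0` (for `α < 0`). -/
def alphaMean (α l u v : ℝ) : ℝ :=
  if u = 0 ∨ v = 0 then 0 else (l * u ^ α + (1 - l) * v ^ α) ^ (1 / α)

/-- The difference `∫ G_α ⋆_α (ε ·_α f) - ∫ G_α` appearing in the definition of the
`α`-mean width, where `G_α ⋆_α (ε ·_α f)` is the `α`-concave function whose convex base
is `(base_α G_α) □ (ε-homothety of base_α f)`. -/
def widthDiff (n : ℕ) (β : ℝ) (f : EuclideanSpace ℝ (Fin n) → ℝ) (ε : ℝ) : EReal :=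
  ((∫⁻ x, ENNReal.ofReal
      (ofBase β (infConv (gaussBase n) (scaleBase ε (convexBase β f))) x) : ℝ≥0∞) : EReal) -
    ((∫⁻ x : EuclideanSpace ℝ (Fin n),
      ENNReal.ofReal ((1 + ‖x‖ ^ 2 / (2 * β)) ^ (-β)) : ℝ≥0∞) : EReal)

/-
Both the existence of the one-sided derivative and the lower bound come from the
Borell-Brascamp-Lieb inequality for `α`-means, in which the integrals are compared
through their `κ`-means. Put `I(ε) = ∫ G_α ⋆_α (ε ·_α f)` and `I(0) = ∫ G_α`.

* For `0 < l < 1` the perturbation at `l δ` dominates the `α`-mean of `G_α` and the perturbation at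
  `δ`, so `I(l δ) ^ κ ≤ (1 - l) I(0) ^ κ + l I(δ) ^ κ`. The slopes `(I(ε) ^ κ - I(0) ^ κ) / ε` are
  therefore monotone and converge in `[-∞, ∞)` as `ε → 0⁺`.
* The perturbation at `ε` also dominates the `α`-mean of `x ↦ G_α (√(1 - ε) x)`, whose integral is
  `(1 - ε) ^ (-n / 2) ∫ G_α`, and of `f`. Hence `I(ε) ^ κ` is at most
  `(1 - ε) ^ (1 - n κ / 2) (∫ G_α) ^ κ + ε (∫ f) ^ κ`, and differentiating this bound at `0` bounds
  the limit slope from above.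

The map `t ↦ t ^ (1 / κ)` turns this into the derivative of `I`. A limit slope of `-∞` corresponds
to an infinite mean width.
-/

open scoped NNReal Pointwise

theorem ennreal_rpow_le_rpow_iff_of_neg {x y : ℝ≥0∞} {z : ℝ} (hz : z < 0) :
    x ^ z ≤ y ^ z ↔ y ≤ x := by
  rw [← neg_neg z, ENNReal.rpow_neg x, ENNReal.rpow_neg y, ENNReal.inv_le_inv,
    ENNReal.rpow_le_rpow_iff (neg_pos.2 hz)]

theorem volume_add_volume_le_of_isCompact {K L : Set ℝ} (hK : IsCompact K) (hL : IsCompact L)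
    (hK₀ : K.Nonempty) (hL₀ : L.Nonempty) : volume K + volume L ≤ volume (K + L) := by
  -- With `s = max K` and `t = min L`, the translates `t + K` and `s + L` meet only at `s + t`.
  obtain ⟨s, hsK, hs⟩ := hK.exists_isMaxOn hK₀ continuousOn_id
  obtain ⟨t, htL, ht⟩ := hL.exists_isMinOn hL₀ continuousOn_id
  have hdisj : AEDisjoint volume (t +ᵥ K) (s +ᵥ L) := by
    refine measure_mono_null (t := {s + t}) ?_ (by simp)
    rintro _ ⟨⟨x, hx, rfl⟩, y, hy, hxy⟩
    have hxs : x ≤ s := hs hx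
    have hty : t ≤ y := ht hy
    simp only [vadd_eq_add, Set.mem_singleton_iff] at hxy ⊢
    linarith
  calc volume K + volume L = volume (t +ᵥ K) + volume (s +ᵥ L) := by
        rw [measure_vadd, measure_vadd]
    _ = volume ((t +ᵥ K) ∪ (s +ᵥ L)) :=
        (measure_union₀ (hL.vadd s).measurableSet.nullMeasurableSet hdisj).symm
    _ ≤ volume (K + L) := by
        refine measure_mono (Set.union_subset ?_ ?_)
        · rintro _ ⟨x, hx, rfl⟩
          exact ⟨x, hx, t, htL, add_comm x t⟩
        · rintro _ ⟨y, hy, rfl⟩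
          exact ⟨s, hsK, y, hy, rfl⟩

theorem volume_add_volume_le_volume_add {S T : Set ℝ} (hS : MeasurableSet S)
    (hT : MeasurableSet T) (hS₀ : S.Nonempty) (hT₀ : T.Nonempty) :
    volume S + volume T ≤ volume (S + T) := by
  obtain ⟨s, hs⟩ := hS₀
  obtain ⟨t, ht⟩ := hT₀
  rw [hS.measure_eq_iSup_isCompact, hT.measure_eq_iSup_isCompact]
  simp only [iSup_and']
  refine ENNReal.biSup_add_biSup_le' ⟨∅, by simp⟩ ⟨∅, by simp⟩ fun K hK L hL => ?_
  calc volume K + volume L ≤ volume (insert s K) + volume (insert t L) := by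
        gcongr <;> exact Set.subset_insert _ _
    _ ≤ volume (insert s K + insert t L) :=
        volume_add_volume_le_of_isCompact (hK.2.insert s) (hL.2.insert t)
          (Set.insert_nonempty s K) (Set.insert_nonempty t L)
    _ ≤ volume (S + T) :=
        measure_mono (Set.add_subset_add (Set.insert_subset hs hK.1) (Set.insert_subset ht hL.1))

theorem mul_volume_add_mul_volume_le (a b : ℝ≥0) {S T : Set ℝ} (hS : MeasurableSet S)
    (hT : MeasurableSet T) (hS₀ : S.Nonempty) (hT₀ : T.Nonempty) :
    a * volume S + b * volume T ≤ volume (a • S + b • T) := by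
  have hsmul (c : ℝ≥0) (A : Set ℝ) : c * volume A = volume (c • A) := by
    simp [Measure.addHaar_nnreal_smul]
  rw [hsmul, hsmul]
  exact volume_add_volume_le_volume_add (hS.const_smul₀ a) (hT.const_smul₀ b)
    hS₀.smul_set hT₀.smul_set

theorem lintegral_min_one_eq_lintegral_meas_le {Ω : Type*} [MeasurableSpace Ω] (μ : Measure Ω)
    {g : Ω → ℝ≥0∞} (hg : Measurable g) :
    ∫⁻ x, min (g x) 1 ∂μ = ∫⁻ s in Set.Ioo (0 : ℝ) 1, μ {x | ENNReal.ofReal s ≤ g x} := by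
  have hfin (x : Ω) : min (g x) 1 ≠ ⊤ := ((min_le_right _ _).trans_lt ENNReal.one_lt_top).ne
  have hcake := lintegral_eq_lintegral_meas_le μ
    (Eventually.of_forall fun x => ENNReal.toReal_nonneg (a := min (g x) 1))
    (hg.min measurable_const).ennreal_toReal.aemeasurable
  simp only [ENNReal.ofReal_toReal (hfin _)] at hcake
  have hlevel (s : ℝ) (x : Ω) :
      s ≤ (min (g x) 1).toReal ↔ ENNReal.ofReal s ≤ g x ∧ s ≤ 1 := by
    rw [← ENNReal.ofReal_le_iff_le_toReal (hfin x), le_min_iff, ENNReal.ofReal_le_one]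
  have hlow : ∫⁻ s in Set.Ioc (0 : ℝ) 1, μ {x | s ≤ (min (g x) 1).toReal} =
      ∫⁻ s in Set.Ioc (0 : ℝ) 1, μ {x | ENNReal.ofReal s ≤ g x} :=
    setLIntegral_congr_fun measurableSet_Ioc fun s hs => by simp [hlevel, hs.2]
  have hhigh : ∫⁻ s in Set.Ioi (1 : ℝ), μ {x | s ≤ (min (g x) 1).toReal} = 0 :=
    setLIntegral_eq_zero measurableSet_Ioi fun s hs => by simp [hlevel, not_le.2 (Set.mem_Ioi.1 hs)]
  rw [hcake, restrict_Ioo_eq_restrict_Ioc, ← Set.Ioc_union_Ioi_eq_Ioi zero_le_one,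
    lintegral_union measurableSet_Ioi (Set.Ioc_disjoint_Ioi le_rfl), hlow, hhigh, add_zero]

theorem lintegral_add_lintegral_le_of_iSup_eq_one {a b : ℝ≥0} {u v w : ℝ → ℝ≥0∞}
    (hu : Measurable u) (hv : Measurable v) (hw : Measurable w) (hu₁ : ⨆ x, u x = 1)
    (hv₁ : ⨆ x, v x = 1) (h : ∀ x y, min (u x) (v y) ≤ w (a • x + b • y)) :
    a * (∫⁻ x, u x) + b * ∫⁻ x, v x ≤ ∫⁻ x, w x := by
  have hcake {g : ℝ → ℝ≥0∞} (hg : Measurable g) (hg₁ : ⨆ x, g x = 1) :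
      ∫⁻ x, g x = ∫⁻ s in Set.Ioo (0 : ℝ) 1, volume {x | ENNReal.ofReal s ≤ g x} := by
    rw [← lintegral_min_one_eq_lintegral_meas_le volume hg]
    simp only [min_eq_left (hg₁ ▸ le_iSup g _)]
  have hne {g : ℝ → ℝ≥0∞} (hg₁ : ⨆ x, g x = 1) {s : ℝ} (hs : s < 1) :
      {x | ENNReal.ofReal s ≤ g x}.Nonempty := by
    obtain ⟨x, hx⟩ := lt_iSup_iff.1 (hg₁ ▸ ENNReal.ofReal_lt_one.2 hs)
    exact ⟨x, hx.le⟩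
  calc a * (∫⁻ x, u x) + b * ∫⁻ x, v x
    _ ≤ ∫⁻ s in Set.Ioo (0 : ℝ) 1, (a * volume {x | ENNReal.ofReal s ≤ u x} +
          b * volume {x | ENNReal.ofReal s ≤ v x}) := by
        rw [hcake hu hu₁, hcake hv hv₁, ← lintegral_const_mul' _ _ ENNReal.coe_ne_top,
          ← lintegral_const_mul' _ _ ENNReal.coe_ne_top]
        exact le_lintegral_add _ _
    _ ≤ ∫⁻ s in Set.Ioo (0 : ℝ) 1, volume {x | ENNReal.ofReal s ≤ w x} := by
        refine setLIntegral_mono' measurableSet_Ioo fun s hs => ?_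
        refine (mul_volume_add_mul_volume_le a b (measurableSet_le measurable_const hu)
          (measurableSet_le measurable_const hv) (hne hu₁ hs.2) (hne hv₁ hs.2)).trans
          (measure_mono ?_)
        rintro _ ⟨_, ⟨x, hx, rfl⟩, _, ⟨y, hy, rfl⟩, rfl⟩
        exact (le_min hx hy).trans (h x y)
    _ ≤ ∫⁻ x, w x := by
        rw [← lintegral_min_one_eq_lintegral_meas_le volume hw]
        exact lintegral_mono fun x => min_le_left _ _

theorem ennreal_mul_rpow_of_ne_zero_of_ne_top {x : ℝ≥0∞} (hx₀ : x ≠ 0) (hx : x ≠ ⊤) (y : ℝ≥0∞)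
    (z : ℝ) : (x * y) ^ z = x ^ z * y ^ z := by
  simp [ENNReal.mul_rpow_eq_ite, hx₀, hx]

/-- Radon's inequality. -/
theorem ennreal_add_rpow_mul_add_rpow_le {s : ℝ} (hs : 1 < s) (x y p q : ℝ≥0∞) :
    (x + y) ^ s * (p + q) ^ (1 - s) ≤ x ^ s * p ^ (1 - s) + y ^ s * q ^ (1 - s) := by
  have hs₀ : 0 < s := one_pos.trans hs
  have hs₁ : 1 - s < 0 := sub_neg.2 hs
  rcases eq_or_ne p 0 with rfl | hp₀
  · rcases eq_or_ne x 0 with rfl | hx₀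
    · simp [hs₀]
    · simp [ENNReal.zero_rpow_of_neg hs₁, ENNReal.mul_top, hx₀, hs₀.not_gt]
  rcases eq_or_ne q 0 with rfl | hq₀
  · rcases eq_or_ne y 0 with rfl | hy₀
    · simp [hs₀]
    · simp [ENNReal.zero_rpow_of_neg hs₁, ENNReal.mul_top, hy₀, hs₀.not_gt]
  rcases eq_or_ne p ⊤ with rfl | hp
  · simp [ENNReal.top_rpow_of_neg hs₁]
  rcases eq_or_ne q ⊤ with rfl | hq
  · simp [ENNReal.top_rpow_of_neg hs₁]
  have hpq₀ : p + q ≠ 0 := by simp [hp₀]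
  have hpq : p + q ≠ ⊤ := ENNReal.add_ne_top.2 ⟨hp, hq⟩
  have hpersp {t : ℝ≥0∞} (ht₀ : t ≠ 0) (ht : t ≠ ⊤) (z : ℝ≥0∞) :
      z ^ s * t ^ (1 - s) = t * (z / t) ^ s := by
    rw [ENNReal.rpow_sub _ _ ht₀ ht, ENNReal.rpow_one, ENNReal.div_rpow_of_nonneg _ _ hs₀.le]
    simp only [div_eq_mul_inv]
    ring
  have hweight {t : ℝ≥0∞} (ht₀ : t ≠ 0) (ht : t ≠ ⊤) (z : ℝ≥0∞) :
      t / (p + q) * (z / t) = z / (p + q) := by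
    rw [ENNReal.div_eq_inv_mul, mul_assoc, ENNReal.mul_div_cancel ht₀ ht, ENNReal.div_eq_inv_mul]
  rw [hpersp hpq₀ hpq, hpersp hp₀ hp, hpersp hq₀ hq]
  calc (p + q) * ((x + y) / (p + q)) ^ s
    _ = (p + q) * (p / (p + q) * (x / p) + q / (p + q) * (y / q)) ^ s := by
        rw [hweight hp₀ hp, hweight hq₀ hq, ENNReal.add_div]
    _ ≤ (p + q) * (p / (p + q) * (x / p) ^ s + q / (p + q) * (y / q) ^ s) := by
        gcongr
        exact ENNReal.rpow_arith_mean_le_arith_mean2_rpow _ _ _ _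
          (by rw [ENNReal.div_add_div_same, ENNReal.div_self hpq₀ hpq]) hs.le
    _ = p * (x / p) ^ s + q * (y / q) ^ s := by
        rw [mul_add, ← mul_assoc, ← mul_assoc, ENNReal.mul_div_cancel hpq₀ hpq,
          ENNReal.mul_div_cancel hpq₀ hpq]

section BorellBrascampLieb

variable {a b : ℝ≥0}

theorem ne_zero_and_ne_top_of_rpow_eq {γ : ℝ} (hγ : γ < 0) (ha : a ≠ 0) {A B C : ℝ≥0∞}
    (hA₀ : A ≠ 0) (hA : A ≠ ⊤) (hB₀ : B ≠ 0) (hC : C ^ γ = a * A ^ γ + b * B ^ γ) :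
    C ≠ 0 ∧ C ≠ ⊤ := by
  have hmean₀ : a * A ^ γ + b * B ^ γ ≠ 0 := by simp [ha, ENNReal.rpow_eq_zero_iff, hA₀, hA]
  have hmean : a * A ^ γ + b * B ^ γ ≠ ⊤ := by
    simp [ENNReal.mul_eq_top, ENNReal.rpow_eq_top_iff, hA₀, hB₀, hγ.not_gt]
  constructor <;> rintro rfl
  · exact hmean (hC ▸ ENNReal.zero_rpow_of_neg hγ)
  · exact hmean₀ (hC ▸ ENNReal.top_rpow_of_neg hγ)

theorem mul_arith_mean_rpow_le {γ : ℝ} (ha : a ≠ 0) (hb : b ≠ 0) (hγ₁ : -1 < γ) (hγ₀ : γ < 0)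
    {A B C : ℝ≥0∞} (hA₀ : A ≠ 0) (hA : A ≠ ⊤) (hB₀ : B ≠ 0) (hB : B ≠ ⊤)
    (hC : C ^ γ = a * A ^ γ + b * B ^ γ) (p q : ℝ≥0∞) :
    (C * (a * p + b * q)) ^ (γ / (1 + γ)) ≤
      a * (A * p) ^ (γ / (1 + γ)) + b * (B * q) ^ (γ / (1 + γ)) := by
  obtain ⟨hC₀, hCt⟩ := ne_zero_and_ne_top_of_rpow_eq hγ₀ ha hA₀ hA hB₀ hC
  have hγ : 0 < 1 + γ := by linarith
  set s := (1 + γ)⁻¹ with hs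
  have hs₁ : 1 < s := (one_lt_inv₀ hγ).2 (by linarith)
  have hγs : γ / (1 + γ) = γ * s := rfl
  have hsub : γ / (1 + γ) = 1 - s := by rw [hs]; field_simp; ring
  have hterm {c : ℝ≥0} (hc : c ≠ 0) {K : ℝ≥0∞} (hK₀ : K ≠ 0) (hK : K ≠ ⊤) (r : ℝ≥0∞) :
      (c * K ^ γ) ^ s * (c * r) ^ (1 - s) = c * (K * r) ^ (γ / (1 + γ)) := by
    have hc' : (c : ℝ≥0∞) ≠ 0 := by simpa
    rw [ennreal_mul_rpow_of_ne_zero_of_ne_top hc' ENNReal.coe_ne_top,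
      ennreal_mul_rpow_of_ne_zero_of_ne_top hc' ENNReal.coe_ne_top,
      ennreal_mul_rpow_of_ne_zero_of_ne_top hK₀ hK, ← ENNReal.rpow_mul, ← hγs, hsub,
      mul_mul_mul_comm, ← ENNReal.rpow_add _ _ hc' ENNReal.coe_ne_top, add_sub_cancel,
      ENNReal.rpow_one]
  calc (C * (a * p + b * q)) ^ (γ / (1 + γ))
    _ = (a * A ^ γ + b * B ^ γ) ^ s * (a * p + b * q) ^ (1 - s) := by
        rw [ennreal_mul_rpow_of_ne_zero_of_ne_top hC₀ hCt, ← hC, ← ENNReal.rpow_mul, ← hγs, hsub]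
    _ ≤ (a * A ^ γ) ^ s * (a * p) ^ (1 - s) + (b * B ^ γ) ^ s * (b * q) ^ (1 - s) :=
        ennreal_add_rpow_mul_add_rpow_le hs₁ _ _ _ _
    _ = a * (A * p) ^ (γ / (1 + γ)) + b * (B * q) ^ (γ / (1 + γ)) := by
        rw [hterm ha hA₀ hA, hterm hb hB₀ hB]

theorem mul_lintegral_add_lintegral_le {γ : ℝ} (ha : a ≠ 0) (hγ : γ < 0)
    {u v w : ℝ → ℝ≥0∞} (hu : Measurable u) (hv : Measurable v) (hw : Measurable w)
    {A B C : ℝ≥0∞} (hAu : ⨆ x, u x = A) (hBv : ⨆ x, v x = B) (hA₀ : A ≠ 0) (hA : A ≠ ⊤)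
    (hB₀ : B ≠ 0) (hB : B ≠ ⊤) (hC : C ^ γ = a * A ^ γ + b * B ^ γ)
    (h : ∀ x y, w (a • x + b • y) ^ γ ≤ a * u x ^ γ + b * v y ^ γ) :
    C * (a * (A⁻¹ * ∫⁻ x, u x) + b * (B⁻¹ * ∫⁻ x, v x)) ≤ ∫⁻ x, w x := by
  obtain ⟨hC₀, hCt⟩ := ne_zero_and_ne_top_of_rpow_eq hγ ha hA₀ hA hB₀ hC
  -- After normalizing the suprema to `1` the mean condition weakens to one on minima.
  have hmin (x y : ℝ) : min (A⁻¹ * u x) (B⁻¹ * v y) ≤ C⁻¹ * w (a • x + b • y) := by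
    set m := min (A⁻¹ * u x) (B⁻¹ * v y)
    have hmu : A * m ≤ u x := (ENNReal.mul_le_iff_le_inv hA₀ hA).2 (min_le_left _ _)
    have hmv : B * m ≤ v y := (ENNReal.mul_le_iff_le_inv hB₀ hB).2 (min_le_right _ _)
    rw [← ENNReal.mul_le_iff_le_inv hC₀ hCt, ← ennreal_rpow_le_rpow_iff_of_neg hγ]
    calc w (a • x + b • y) ^ γ ≤ a * u x ^ γ + b * v y ^ γ := h x y
      _ ≤ a * (A * m) ^ γ + b * (B * m) ^ γ := by
          gcongr _ * ?_ + _ * ?_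
          · exact (ennreal_rpow_le_rpow_iff_of_neg hγ).2 hmu
          · exact (ennreal_rpow_le_rpow_iff_of_neg hγ).2 hmv
      _ = (C * m) ^ γ := by
          simp only [ennreal_mul_rpow_of_ne_zero_of_ne_top, hA₀, hA, hB₀, hB, hC₀, hCt, hC, ne_eq,
            not_false_eq_true]
          ring
  have hnorm := lintegral_add_lintegral_le_of_iSup_eq_one (hu.const_mul A⁻¹) (hv.const_mul B⁻¹)
    (hw.const_mul C⁻¹) (by rw [← ENNReal.mul_iSup, hAu, ENNReal.inv_mul_cancel hA₀ hA])
    (by rw [← ENNReal.mul_iSup, hBv, ENNReal.inv_mul_cancel hB₀ hB]) hmin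
  rw [ENNReal.mul_le_iff_le_inv hC₀ hCt]
  rwa [lintegral_const_mul _ hu, lintegral_const_mul _ hv, lintegral_const_mul _ hw] at hnorm

theorem borell_brascamp_lieb_real_of_iSup_ne_top {γ : ℝ} (ha : a ≠ 0) (hb : b ≠ 0) (hγ₁ : -1 < γ)
    (hγ₀ : γ < 0) {u v w : ℝ → ℝ≥0∞} (hu : Measurable u) (hv : Measurable v) (hw : Measurable w)
    (hA : ⨆ x, u x ≠ ⊤) (hB : ⨆ x, v x ≠ ⊤)
    (h : ∀ x y, w (a • x + b • y) ^ γ ≤ a * u x ^ γ + b * v y ^ γ) :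
    (∫⁻ x, w x) ^ (γ / (1 + γ)) ≤
      a * (∫⁻ x, u x) ^ (γ / (1 + γ)) + b * (∫⁻ x, v x) ^ (γ / (1 + γ)) := by
  have hk : γ / (1 + γ) < 0 := div_neg_of_neg_of_pos hγ₀ (by linarith)
  rcases eq_or_ne (⨆ x, u x) 0 with hA₀ | hA₀
  · simp [ENNReal.iSup_eq_zero.1 hA₀, ENNReal.zero_rpow_of_neg hk, ENNReal.mul_top, ha]
  rcases eq_or_ne (⨆ x, v x) 0 with hB₀ | hB₀
  · simp [ENNReal.iSup_eq_zero.1 hB₀, ENNReal.zero_rpow_of_neg hk, ENNReal.mul_top, hb]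
  have hC := ENNReal.rpow_inv_rpow hγ₀.ne (a * (⨆ x, u x) ^ γ + b * (⨆ x, v x) ^ γ)
  calc (∫⁻ x, w x) ^ (γ / (1 + γ))
    _ ≤ _ := (ennreal_rpow_le_rpow_iff_of_neg hk).2 <|
        mul_lintegral_add_lintegral_le ha hγ₀ hu hv hw rfl rfl hA₀ hA hB₀ hB hC h
    _ ≤ _ := mul_arith_mean_rpow_le ha hb hγ₁ hγ₀ hA₀ hA hB₀ hB hC _ _
    _ = a * (∫⁻ x, u x) ^ (γ / (1 + γ)) + b * (∫⁻ x, v x) ^ (γ / (1 + γ)) := by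
        rw [ENNReal.mul_inv_cancel_left hA₀ hA, ENNReal.mul_inv_cancel_left hB₀ hB]

theorem tendsto_lintegral_min_natCast {Ω : Type*} [MeasurableSpace Ω] {μ : Measure Ω}
    {u : Ω → ℝ≥0∞} (hu : Measurable u) :
    Tendsto (fun m : ℕ => ∫⁻ x, min (u x) m ∂μ) atTop (𝓝 (∫⁻ x, u x ∂μ)) := by
  refine lintegral_tendsto_of_tendsto_of_monotone
    (fun m => (hu.min measurable_const).aemeasurable)
    (Eventually.of_forall fun x m m' hm => min_le_min_left _ (Nat.cast_le.2 hm))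
    (Eventually.of_forall fun x => ?_)
  simpa using (tendsto_const_nhds (x := u x)).min ENNReal.tendsto_nat_nhds_top

theorem borell_brascamp_lieb_real {γ : ℝ} (ha : a ≠ 0) (hb : b ≠ 0) (hγ₁ : -1 < γ)
    (hγ₀ : γ < 0) {u v w : ℝ → ℝ≥0∞} (hu : Measurable u) (hv : Measurable v) (hw : Measurable w)
    (h : ∀ x y, w (a • x + b • y) ^ γ ≤ a * u x ^ γ + b * v y ^ γ) :
    (∫⁻ x, w x) ^ (γ / (1 + γ)) ≤
      a * (∫⁻ x, u x) ^ (γ / (1 + γ)) + b * (∫⁻ x, v x) ^ (γ / (1 + γ)) := by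
  have hbdd (u : ℝ → ℝ≥0∞) (m : ℕ) : ⨆ x, min (u x) m ≠ ⊤ :=
    ((iSup_le fun x => min_le_right _ _).trans_lt (ENNReal.natCast_lt_top m)).ne
  have htrunc (m : ℕ) : (∫⁻ x, w x) ^ (γ / (1 + γ)) ≤
      a * (∫⁻ x, min (u x) m) ^ (γ / (1 + γ)) + b * (∫⁻ x, min (v x) m) ^ (γ / (1 + γ)) := by
    refine borell_brascamp_lieb_real_of_iSup_ne_top ha hb hγ₁ hγ₀ (hu.min measurable_const)
      (hv.min measurable_const) hw (hbdd u m) (hbdd v m) fun x y => (h x y).trans ?_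
    gcongr _ * ?_ + _ * ?_
    · exact (ennreal_rpow_le_rpow_iff_of_neg hγ₀).2 (min_le_left _ _)
    · exact (ennreal_rpow_le_rpow_iff_of_neg hγ₀).2 (min_le_left _ _)
  have hlim (c : ℝ≥0) {u : ℝ → ℝ≥0∞} (hu : Measurable u) :
      Tendsto (fun m : ℕ => c * (∫⁻ x, min (u x) m) ^ (γ / (1 + γ))) atTop
        (𝓝 (c * (∫⁻ x, u x) ^ (γ / (1 + γ)))) :=
    ENNReal.Tendsto.const_mul ((ENNReal.continuous_rpow_const.tendsto _).comp
      (tendsto_lintegral_min_natCast hu)) (Or.inr ENNReal.coe_ne_top)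
  exact ge_of_tendsto' ((hlim a hu).add (hlim b hv)) htrunc

theorem measurePreserving_cons (n : ℕ) :
    MeasurePreserving fun p : ℝ × (Fin n → ℝ) => (Fin.cons p.1 p.2 : Fin (n + 1) → ℝ) := by
  convert (volume_preserving_piFinSuccAbove (fun _ : Fin (n + 1) => ℝ) 0).symm using 1
  ext p : 1
  simp [MeasurableEquiv.piFinSuccAbove_symm_apply, Fin.insertNthEquiv]

theorem lintegral_eq_lintegral_lintegral_cons {n : ℕ} {u : (Fin (n + 1) → ℝ) → ℝ≥0∞}
    (hu : Measurable u) :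
    ∫⁻ x, u x = ∫⁻ t : ℝ, ∫⁻ x : Fin n → ℝ, u (Fin.cons t x) := by
  have hcons := measurePreserving_cons n
  rw [← hcons.lintegral_comp hu, Measure.volume_eq_prod]
  exact lintegral_prod _ (hu.comp hcons.measurable).aemeasurable

theorem div_one_add_div_one_add {n : ℕ} {α : ℝ} (h : 1 + n * α ≠ 0) :
    α / (1 + n * α) / (1 + α / (1 + n * α)) = α / (1 + (n + 1 : ℕ) * α) := by
  rw [one_add_div h, div_div_div_cancel_right₀ h]
  push_cast
  ring

theorem borell_brascamp_lieb_pi {α : ℝ} (ha : a ≠ 0) (hb : b ≠ 0) (hα : α < 0) {n : ℕ}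
    (hn : 0 < 1 + n * α) {u v w : (Fin n → ℝ) → ℝ≥0∞} (hu : Measurable u) (hv : Measurable v)
    (hw : Measurable w) (h : ∀ x y, w (a • x + b • y) ^ α ≤ a * u x ^ α + b * v y ^ α) :
    (∫⁻ x, w x) ^ (α / (1 + n * α)) ≤
      a * (∫⁻ x, u x) ^ (α / (1 + n * α)) + b * (∫⁻ x, v x) ^ (α / (1 + n * α)) := by
  induction n with
  | zero => simpa [Measure.volume_pi_eq_dirac 0] using h 0 0
  | succ n ih =>
    push_cast at hn
    have hn' : 0 < 1 + n * α := by linarith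
    have hcons := (measurePreserving_cons n).measurable
    have hfiber {u : (Fin (n + 1) → ℝ) → ℝ≥0∞} (hu : Measurable u) (t : ℝ) :
        Measurable fun x : Fin n → ℝ => u (Fin.cons t x) :=
      (hu.comp hcons).comp measurable_prodMk_left
    have hmarginal {u : (Fin (n + 1) → ℝ) → ℝ≥0∞} (hu : Measurable u) :
        Measurable fun t : ℝ => ∫⁻ x : Fin n → ℝ, u (Fin.cons t x) :=
      (hu.comp hcons).lintegral_prod_right'
    rw [lintegral_eq_lintegral_lintegral_cons hu, lintegral_eq_lintegral_lintegral_cons hv,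
      lintegral_eq_lintegral_lintegral_cons hw, ← div_one_add_div_one_add hn'.ne']
    refine borell_brascamp_lieb_real ha hb ((lt_div_iff₀ hn').2 (by linarith))
      (div_neg_of_neg_of_pos hα hn') (hmarginal hu) (hmarginal hv) (hmarginal hw) fun s t =>
      ih hn' (hfiber hu s) (hfiber hv t) (hfiber hw _) fun x y => ?_
    have hsum : (Fin.cons (a • s + b • t) (a • x + b • y) : Fin (n + 1) → ℝ) =
        a • Fin.cons s x + b • Fin.cons t y := by
      ext i
      cases i using Fin.cases <;> simp
    exact hsum ▸ h (Fin.cons s x) (Fin.cons t y)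

theorem borell_brascamp_lieb {E : Type*} [NormedAddCommGroup E] [NormedSpace ℝ E]
    [FiniteDimensional ℝ E] [MeasurableSpace E] [BorelSpace E] (μ : Measure E)
    [μ.IsAddHaarMeasure] {α : ℝ} (ha : a ≠ 0) (hb : b ≠ 0) (hα : α < 0)
    (hdim : 0 < 1 + Module.finrank ℝ E * α) {u v w : E → ℝ≥0∞}
    (hw : Measurable w) (h : ∀ x y, w (a • x + b • y) ^ α ≤ a * u x ^ α + b * v y ^ α) :
    (∫⁻ x, w x ∂μ) ^ (α / (1 + Module.finrank ℝ E * α)) ≤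
      a * (∫⁻ x, u x ∂μ) ^ (α / (1 + Module.finrank ℝ E * α)) +
        b * (∫⁻ x, v x ∂μ) ^ (α / (1 + Module.finrank ℝ E * α)) := by
  obtain ⟨u', hu', hu'_le, hu'_eq⟩ := exists_measurable_le_lintegral_eq μ u
  obtain ⟨v', hv', hv'_le, hv'_eq⟩ := exists_measurable_le_lintegral_eq μ v
  let e : (Fin (Module.finrank ℝ E) → ℝ) ≃L[ℝ] E := ContinuousLinearEquiv.ofFinrankEq (by simp)
  have he : Measurable e := e.continuous.measurable
  set c := μ.addHaarScalarFactor (volume.map e)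
  have hc : (c : ℝ≥0∞) ≠ 0 :=
    ENNReal.coe_ne_zero.2 (Measure.addHaarScalarFactor_pos_of_isAddHaarMeasure _ _).ne'
  have hμ : μ = c • volume.map e := Measure.isAddLeftInvariant_eq_smul _ _
  have hpull {g : E → ℝ≥0∞} (hg : Measurable g) (k : ℝ) :
      (∫⁻ x, g x ∂μ) ^ k = c ^ k * (∫⁻ x, g (e x)) ^ k := by
    rw [hμ, lintegral_smul_measure, lintegral_map hg he, ENNReal.smul_def, smul_eq_mul,
      ennreal_mul_rpow_of_ne_zero_of_ne_top hc ENNReal.coe_ne_top]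
  rw [hu'_eq, hv'_eq, hpull hw, hpull hu', hpull hv', mul_left_comm (a : ℝ≥0∞),
    mul_left_comm (b : ℝ≥0∞), ← mul_add]
  gcongr
  refine borell_brascamp_lieb_pi ha hb hα hdim (hu'.comp he) (hv'.comp he) (hw.comp he)
    fun x y => ?_
  calc w (e (a • x + b • y)) ^ α = w (a • e x + b • e y) ^ α := by
        simp only [NNReal.smul_def, map_add, map_smul]
    _ ≤ a * u (e x) ^ α + b * v (e y) ^ α := h (e x) (e y)
    _ ≤ a * u' (e x) ^ α + b * v' (e y) ^ α := by
        gcongr _ * ?_ + _ * ?_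
        · exact (ennreal_rpow_le_rpow_iff_of_neg hα).2 (hu'_le _)
        · exact (ennreal_rpow_le_rpow_iff_of_neg hα).2 (hv'_le _)

end BorellBrascampLieb

/-- The `α`-Gaussian `G_α`, where `α = -1/β`, as a function on a normed space. -/
def alphaGaussian {E : Type*} [NormedAddCommGroup E] (β : ℝ) (x : E) : ℝ :=
  (1 + ‖x‖ ^ 2 / (2 * β)) ^ (-β)

/-- The perturbation `G_α ⋆_α (ε ·_α f)` of the `α`-Gaussian, whose integral is differentiated at
`ε = 0⁺` to define the `α`-mean width; it is valued in `ℝ≥0∞` to be used under `∫⁻`. -/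
def alphaPerturbation {n : ℕ} (β : ℝ) (f : EuclideanSpace ℝ (Fin n) → ℝ) (ε : ℝ)
    (x : EuclideanSpace ℝ (Fin n)) : ℝ≥0∞ :=
  ENNReal.ofReal (ofBase β (infConv (gaussBase n) (scaleBase ε (convexBase β f))) x)

section Gaussian

variable {E : Type*} [NormedAddCommGroup E] {β : ℝ}

theorem alphaGaussian_pos (hβ : 0 < β) (x : E) : 0 < alphaGaussian β x := by
  unfold alphaGaussian
  positivity

theorem ofReal_rpow_neg_rpow (hβ : 0 < β) {t : ℝ} (ht : 0 < t) :
    ENNReal.ofReal (t ^ (-β)) ^ (-1 / β) = ENNReal.ofReal t := by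
  rw [← ENNReal.ofReal_rpow_of_pos ht, ← ENNReal.rpow_mul, neg_mul_comm, neg_div, neg_neg,
    mul_one_div_cancel hβ.ne', ENNReal.rpow_one]

theorem ofReal_alphaGaussian_rpow (hβ : 0 < β) (x : E) :
    ENNReal.ofReal (alphaGaussian β x) ^ (-1 / β) = 1 + ENNReal.ofReal (‖x‖ ^ 2 / (2 * β)) := by
  rw [alphaGaussian, ofReal_rpow_neg_rpow hβ (by positivity),
    ENNReal.ofReal_add zero_le_one (by positivity), ENNReal.ofReal_one]

variable [NormedSpace ℝ E] [FiniteDimensional ℝ E] [MeasurableSpace E] [BorelSpace E]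
  (μ : Measure E) [μ.IsAddHaarMeasure]

theorem integrable_alphaGaussian (hβ : Module.finrank ℝ E < β) :
    Integrable (alphaGaussian β : E → ℝ) μ := by
  have hβ₀ : 0 < 2 * β := mul_pos two_pos ((Nat.cast_nonneg _).trans_lt hβ)
  have hint := (integrable_rpow_neg_one_add_norm_sq (E := E) (μ := μ) (r := 2 * β)
    (by linarith)).comp_smul (inv_ne_zero (Real.sqrt_pos.2 hβ₀).ne')
  refine hint.congr (Eventually.of_forall fun x => ?_)
  simp only [alphaGaussian, norm_smul, norm_inv, Real.norm_eq_abs, mul_pow, inv_pow, sq_abs,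
    Real.sq_sqrt hβ₀.le]
  congr 1 <;> ring

theorem integral_alphaGaussian_pos (hβ : Module.finrank ℝ E < β) :
    0 < ∫ x : E, alphaGaussian β x ∂μ := by
  have hpos := alphaGaussian_pos (E := E) ((Nat.cast_nonneg _).trans_lt hβ)
  have hsupp : Function.support (alphaGaussian β : E → ℝ) = Set.univ :=
    Set.eq_univ_of_forall fun x => (hpos x).ne'
  rw [integral_pos_iff_support_of_nonneg (fun x => (hpos x).le) (integrable_alphaGaussian μ hβ),
    hsupp]
  exact Measure.measure_univ_pos.2 (NeZero.ne μ)

theorem lintegral_alphaGaussian (hβ : Module.finrank ℝ E < β) :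
    ∫⁻ x : E, ENNReal.ofReal (alphaGaussian β x) ∂μ =
      ENNReal.ofReal (∫ x : E, alphaGaussian β x ∂μ) :=
  (ofReal_integral_eq_lintegral_ofReal (integrable_alphaGaussian μ hβ) (Eventually.of_forall
    fun x => (alphaGaussian_pos ((Nat.cast_nonneg _).trans_lt hβ) x).le)).symm

theorem lintegral_comp_sqrt_smul (g : E → ℝ≥0∞) {s : ℝ} (hs : 0 < s) :
    ∫⁻ x : E, g (√s • x) ∂μ =
      ENNReal.ofReal (s ^ (-(Module.finrank ℝ E : ℝ) / 2)) * ∫⁻ x : E, g x ∂μ := by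
  have hs' : 0 < √s := Real.sqrt_pos.2 hs
  have hpow : (√s ^ Module.finrank ℝ E)⁻¹ = s ^ (-(Module.finrank ℝ E : ℝ) / 2) := by
    rw [Real.sqrt_eq_rpow, ← Real.rpow_natCast, ← Real.rpow_mul hs.le, ← Real.rpow_neg hs.le]
    congr 1
    ring
  have hemb : MeasurableEmbedding ((√s • ·) : E → E) :=
    (Homeomorph.smulOfNeZero _ hs'.ne').measurableEmbedding
  rw [← hemb.lintegral_map, Measure.map_addHaar_smul μ hs'.ne', lintegral_smul_measure,
    abs_of_pos (by positivity), hpow, smul_eq_mul]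

end Gaussian

section Perturbation

variable {n : ℕ}

theorem infConv_scaleBase {l : ℝ} (hl : l ≠ 0) (φ ψ : EuclideanSpace ℝ (Fin n) → EReal)
    (x : EuclideanSpace ℝ (Fin n)) :
    infConv φ (scaleBase l ψ) x = ⨅ p, φ (x - l • p) + l * ψ p := by
  let e : EuclideanSpace ℝ (Fin n) ≃ EuclideanSpace ℝ (Fin n) :=
    (MulAction.toPerm (Units.mk0 l hl)).trans (Equiv.subLeft x)
  refine (Equiv.iInf_congr e fun p => ?_).symm
  simp [e, scaleBase, Units.smul_def, smul_smul, hl]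

theorem ofReal_ofBase_rpow {β : ℝ} (hβ : 0 < β) {φ : EuclideanSpace ℝ (Fin n) → EReal}
    {x : EuclideanSpace ℝ (Fin n)} (hφ : (-β : ℝ) < φ x) :
    ENNReal.ofReal (ofBase β φ x) ^ (-1 / β) = (1 + φ x / β).toENNReal := by
  have hneg : -1 / β < 0 := div_neg_of_neg_of_pos (by norm_num) hβ
  unfold ofBase
  generalize φ x = e at hφ
  induction e with
  | bot => simp at hφ
  | top =>
    rw [if_pos rfl, ENNReal.ofReal_zero, ENNReal.zero_rpow_of_neg hneg,
      EReal.top_div_of_pos_ne_top (EReal.coe_pos.2 hβ) (EReal.coe_ne_top β)]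
    rfl
  | coe r =>
    have hr : 0 < 1 + r / β := by
      have := (lt_div_iff₀ hβ).2 (show -1 * β < r by simpa using EReal.coe_lt_coe_iff.1 hφ)
      linarith
    rw [if_neg (EReal.coe_ne_top r), EReal.toReal_coe, ofReal_rpow_neg_rpow hβ hr]
    norm_cast

theorem continuous_ereal_div_coe {β : ℝ} (hβ : β ≠ 0) : Continuous fun e : EReal => e / β := by
  have hinv : ((β⁻¹ : ℝ) : EReal) ≠ 0 := EReal.coe_ne_zero.2 (inv_ne_zero hβ)
  refine continuous_iff_continuousAt.2 fun e => ?_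
  exact (EReal.continuousAt_mul (p := (e, ((β⁻¹ : ℝ) : EReal))) (.inr (EReal.coe_ne_bot _))
    (.inr (EReal.coe_ne_top _)) (.inr hinv) (.inr hinv)).comp
    (f := fun e : EReal => (e, ((β⁻¹ : ℝ) : EReal))) (by fun_prop)

theorem toENNReal_one_add_iInf_div {ι : Type*} {β : ℝ} (hβ : 0 < β) (u : ι → EReal) :
    (1 + (⨅ i, u i) / β).toENNReal = ⨅ i, (1 + u i / β).toENNReal := by
  have hmono : Monotone fun e : EReal => (1 + e / β).toENNReal := fun e e' h =>
    EReal.toENNReal_le_toENNReal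
      (add_le_add_right (EReal.monotone_div_right_of_nonneg (EReal.coe_nonneg.2 hβ.le) h) 1)
  have hcont : Continuous fun e : EReal => (1 + e / β).toENNReal :=
    EReal.continuous_toENNReal.comp <| continuous_iff_continuousAt.2 fun e =>
      (EReal.continuousAt_add (.inl (EReal.coe_ne_top 1)) (.inl (EReal.coe_ne_bot 1))).comp
        (continuousAt_const.prodMk (continuous_ereal_div_coe hβ.ne').continuousAt)
  refine Monotone.map_iInf_of_continuousAt hcont.continuousAt hmono ?_
  rw [EReal.top_div_of_pos_ne_top (EReal.coe_pos.2 hβ) (EReal.coe_ne_top β)]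
  rfl

theorem toENNReal_one_add_div_add_mul_convexBase {β : ℝ} (hβ : 0 < β) {a b : ℝ≥0} (hab : a + b = 1)
    (hb : b ≠ 0) {f : EuclideanSpace ℝ (Fin n) → ℝ} (hf : ∀ x, 0 ≤ f x)
    (x p : EuclideanSpace ℝ (Fin n)) :
    (1 + (gaussBase n x + (b : ℝ) * convexBase β f p) / β).toENNReal =
      a + ENNReal.ofReal (‖x‖ ^ 2 / (2 * β)) + b * ENNReal.ofReal (f p) ^ (-1 / β) := by
  have hneg : -1 / β < 0 := div_neg_of_neg_of_pos (by norm_num) hβ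
  have hb' : (0 : ℝ) < b := NNReal.coe_pos.2 (pos_iff_ne_zero.2 hb)
  rcases (hf p).eq_or_lt with h0 | hpos
  · rw [convexBase, if_pos h0.symm, EReal.coe_mul_top_of_pos hb', gaussBase,
      EReal.coe_add_top, EReal.top_div_of_pos_ne_top (EReal.coe_pos.2 hβ) (EReal.coe_ne_top β),
      ← h0, ENNReal.ofReal_zero, ENNReal.zero_rpow_of_neg hneg,
      ENNReal.mul_top (ENNReal.coe_ne_zero.2 hb), add_top]
    rfl
  · have hab' : (a : ℝ) + b = 1 := by exact_mod_cast hab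
    have hreal : 1 + (‖x‖ ^ 2 / 2 + b * (β * (f p ^ (-1 / β) - 1))) / β =
        a + ‖x‖ ^ 2 / (2 * β) + b * f p ^ (-1 / β) := by
      rw [← eq_sub_iff_add_eq] at hab'
      rw [hab']
      field_simp
      ring
    rw [convexBase, if_neg hpos.ne', gaussBase, ← EReal.coe_mul, ← EReal.coe_add, ← EReal.coe_div,
      ← EReal.coe_one, ← EReal.coe_add, hreal, EReal.toENNReal_of_ne_top (EReal.coe_ne_top _),
      EReal.toReal_coe, ENNReal.ofReal_add (by positivity) (by positivity),
      ENNReal.ofReal_add (by positivity) (by positivity), ENNReal.ofReal_mul b.coe_nonneg,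
      ENNReal.ofReal_coe_nnreal, ENNReal.ofReal_coe_nnreal, ENNReal.ofReal_rpow_of_pos hpos]

theorem neg_lt_infConv_gaussBase {β : ℝ} (hβ : 0 < β) {ε : ℝ} (hε₀ : 0 < ε) (hε₁ : ε < 1)
    {f : EuclideanSpace ℝ (Fin n) → ℝ} (hf : ∀ x, 0 ≤ f x) (x : EuclideanSpace ℝ (Fin n)) :
    (-β : ℝ) < infConv (gaussBase n) (scaleBase ε (convexBase β f)) x := by
  rw [infConv_scaleBase hε₀.ne']
  refine lt_of_lt_of_le (EReal.coe_lt_coe (by nlinarith : -β < -(ε * β))) (le_iInf fun p => ?_)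
  unfold gaussBase convexBase
  split_ifs with h0
  · rw [EReal.coe_mul_top_of_pos hε₀, EReal.coe_add_top]
    exact le_top
  · have hpow : 0 ≤ ε * β * f p ^ (-1 / β) := by
      have := hf p
      positivity
    rw [← EReal.coe_mul, ← EReal.coe_add, EReal.coe_le_coe_iff]
    nlinarith [sq_nonneg ‖x - ε • p‖]

theorem alphaPerturbation_rpow {β : ℝ} (hβ : 0 < β) {a b : ℝ≥0} (hab : a + b = 1)
    (ha : a ≠ 0) (hb : b ≠ 0) {f : EuclideanSpace ℝ (Fin n) → ℝ} (hf : ∀ x, 0 ≤ f x)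
    (x : EuclideanSpace ℝ (Fin n)) :
    alphaPerturbation β f b x ^ (-1 / β) =
      ⨅ p, (a + ENNReal.ofReal (‖x - b • p‖ ^ 2 / (2 * β)) +
        b * ENNReal.ofReal (f p) ^ (-1 / β)) := by
  have hb₀ : (0 : ℝ) < b := NNReal.coe_pos.2 (pos_iff_ne_zero.2 hb)
  have hb₁ : (b : ℝ) < 1 := by
    exact_mod_cast hab ▸ lt_add_of_pos_left b (pos_iff_ne_zero.2 ha)
  rw [alphaPerturbation, ofReal_ofBase_rpow hβ (neg_lt_infConv_gaussBase hβ hb₀ hb₁ hf x),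
    infConv_scaleBase hb₀.ne', toENNReal_one_add_iInf_div hβ]
  exact iInf_congr fun p => toENNReal_one_add_div_add_mul_convexBase hβ hab hb hf (x - b • p) p

theorem measurable_alphaPerturbation {β : ℝ} (hβ : 0 < β) {a b : ℝ≥0} (hab : a + b = 1)
    (ha : a ≠ 0) (hb : b ≠ 0) {f : EuclideanSpace ℝ (Fin n) → ℝ} (hf : ∀ x, 0 ≤ f x) :
    Measurable (alphaPerturbation β f b) := by
  have husc : UpperSemicontinuous fun x => alphaPerturbation β f b x ^ (-1 / β) := by
    simp_rw [alphaPerturbation_rpow hβ hab ha hb hf]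
    refine upperSemicontinuous_iInf fun p => Continuous.upperSemicontinuous ?_
    exact (continuous_const.add (ENNReal.continuous_ofReal.comp (by fun_prop))).add continuous_const
  have hinv (x) : alphaPerturbation β f b x = (alphaPerturbation β f b x ^ (-1 / β)) ^ (-1 / β)⁻¹ :=
    (ENNReal.rpow_rpow_inv (div_neg_of_neg_of_pos (by norm_num) hβ).ne _).symm
  rw [funext hinv]
  exact husc.measurable.pow_const _

theorem alphaPerturbation_smul_add_smul_rpow_le {β : ℝ} (hβ : 0 < β) {a b : ℝ≥0}
    (hab : a + b = 1) (ha : a ≠ 0) (hb : b ≠ 0) {f : EuclideanSpace ℝ (Fin n) → ℝ}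
    (hf : ∀ x, 0 ≤ f x) (x y : EuclideanSpace ℝ (Fin n)) :
    alphaPerturbation β f b (a • x + b • y) ^ (-1 / β) ≤
      a * ENNReal.ofReal (alphaGaussian β (√a • x)) ^ (-1 / β) +
        b * ENNReal.ofReal (f y) ^ (-1 / β) := by
  have hnorm : ENNReal.ofReal (‖a • x + b • y - b • y‖ ^ 2 / (2 * β)) =
      a * ENNReal.ofReal (‖√(a : ℝ) • x‖ ^ 2 / (2 * β)) := by
    rw [add_sub_cancel_right, ← ENNReal.ofReal_coe_nnreal, ← ENNReal.ofReal_mul a.coe_nonneg,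
      NNReal.smul_def, norm_smul, norm_smul, mul_pow, mul_pow, Real.norm_of_nonneg a.coe_nonneg,
      Real.norm_of_nonneg (Real.sqrt_nonneg _), Real.sq_sqrt a.coe_nonneg]
    congr 1
    ring
  rw [alphaPerturbation_rpow hβ hab ha hb hf, ofReal_alphaGaussian_rpow hβ, mul_add, mul_one,
    ← hnorm]
  exact iInf_le _ y

theorem ofReal_norm_sq_smul_add_smul_le {E : Type*} [SeminormedAddCommGroup E] [NormedSpace ℝ E]
    {c : ℝ} (hc : 0 ≤ c) {a b : ℝ≥0} (hab : a + b = 1) (x y : E) :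
    ENNReal.ofReal (‖a • x + b • y‖ ^ 2 / c) ≤
      a * ENNReal.ofReal (‖x‖ ^ 2 / c) + b * ENNReal.ofReal (‖y‖ ^ 2 / c) := by
  have hconv : ‖a • x + b • y‖ ^ 2 ≤ a * ‖x‖ ^ 2 + b * ‖y‖ ^ 2 :=
    ((convexOn_norm convex_univ).pow (fun _ _ => norm_nonneg _) 2).2 (Set.mem_univ x)
      (Set.mem_univ y) a.2 b.2 (by exact_mod_cast hab)
  calc ENNReal.ofReal (‖a • x + b • y‖ ^ 2 / c)
      ≤ ENNReal.ofReal (a * (‖x‖ ^ 2 / c) + b * (‖y‖ ^ 2 / c)) := by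
        refine ENNReal.ofReal_le_ofReal ?_
        rw [← mul_div_assoc, ← mul_div_assoc, ← add_div]
        gcongr
    _ = _ := by
        rw [ENNReal.ofReal_add (by positivity) (by positivity), ENNReal.ofReal_mul a.coe_nonneg,
          ENNReal.ofReal_mul b.coe_nonneg, ENNReal.ofReal_coe_nnreal, ENNReal.ofReal_coe_nnreal]

theorem alphaPerturbation_mul_smul_add_smul_rpow_le {β : ℝ} (hβ : 0 < β) {a b c d : ℝ≥0}
    (hab : a + b = 1) (hcd : c + d = 1) (ha : a ≠ 0) (hb : b ≠ 0) (hc : c ≠ 0) (hd : d ≠ 0)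
    {f : EuclideanSpace ℝ (Fin n) → ℝ} (hf : ∀ x, 0 ≤ f x) (x y : EuclideanSpace ℝ (Fin n)) :
    alphaPerturbation β f (b * d) (a • x + b • y) ^ (-1 / β) ≤
      a * ENNReal.ofReal (alphaGaussian β x) ^ (-1 / β) +
        b * alphaPerturbation β f d y ^ (-1 / β) := by
  have habcd : (a + b * c) + b * d = 1 := by rw [add_assoc, ← mul_add, hcd, mul_one, hab]
  have hsum : a + b * c ≠ 0 := fun h => ha (add_eq_zero.1 h).1
  rw [← NNReal.coe_mul, alphaPerturbation_rpow hβ habcd hsum (mul_ne_zero hb hd) hf,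
    alphaPerturbation_rpow hβ hcd hc hd hf, ofReal_alphaGaussian_rpow hβ, ENNReal.mul_iInf_of_ne
      (ENNReal.coe_ne_zero.2 hb) ENNReal.coe_ne_top, ENNReal.add_iInf]
  refine iInf_mono fun p => ?_
  have hsplit : a • x + b • y - (b * d) • p = a • x + b • (y - d • p) := by
    rw [smul_sub, mul_smul, add_sub_assoc]
  rw [hsplit]
  grw [ofReal_norm_sq_smul_add_smul_le (by positivity) hab x (y - d • p)]
  push_cast
  exact le_of_eq (by ring)

end Perturbation

section OneSidedDerivative

theorem monotoneOn_sub_div {J : ℝ → ℝ} {J₀ : ℝ} (hconv : ∀ δ ∈ Set.Ioo (0 : ℝ) 1,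
      ∀ l ∈ Set.Ioo (0 : ℝ) 1, J (l * δ) ≤ (1 - l) * J₀ + l * J δ) :
    MonotoneOn (fun ε => (J ε - J₀) / ε) (Set.Ioo 0 1) := by
  intro s hs t ht hst
  rcases hst.eq_or_lt with rfl | hlt
  · rfl
  have h := hconv t ht (s / t) ⟨div_pos hs.1 ht.1, (div_lt_one ht.1).2 hlt⟩
  rw [div_mul_cancel₀ _ ht.1.ne'] at h
  change (J s - J₀) / s ≤ (J t - J₀) / t
  rw [div_le_iff₀ hs.1]
  calc J s - J₀ ≤ s / t * (J t - J₀) := by linarith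
    _ = (J t - J₀) / t * s := by ring

theorem exists_tendsto_sub_div_le {J R : ℝ → ℝ} {R' : ℝ}
    (hconv : ∀ δ ∈ Set.Ioo (0 : ℝ) 1, ∀ l ∈ Set.Ioo (0 : ℝ) 1,
      J (l * δ) ≤ (1 - l) * R 0 + l * J δ)
    (hle : ∀ᶠ ε in 𝓝[>] 0, J ε ≤ R ε) (hR : HasDerivWithinAt R R' (Set.Ioi 0) 0) :
    ∃ σ : EReal, Tendsto (fun ε => (((J ε - R 0) / ε : ℝ) : EReal)) (𝓝[>] 0) (𝓝 σ) ∧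
      σ ≤ R' := by
  have hmono : MonotoneOn (fun ε => (((J ε - R 0) / ε : ℝ) : EReal)) (Set.Ioo 0 1) :=
    fun s hs t ht hst => EReal.coe_le_coe (monotoneOn_sub_div hconv hs ht hst)
  have hlim := hmono.tendsto_nhdsWithin_Ioo_right ⟨1 / 2, by norm_num⟩ (OrderBot.bddBelow _)
  refine ⟨_, hlim, ?_⟩
  rw [hasDerivWithinAt_iff_tendsto_slope' (by simp)] at hR
  refine le_of_tendsto_of_tendsto hlim ((continuous_coe_real_ereal.tendsto _).comp hR) ?_
  filter_upwards [hle, self_mem_nhdsWithin] with ε hε hε₀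
  simp only [Function.comp_apply, slope_def_field, sub_zero, EReal.coe_le_coe_iff]
  have : 0 < ε := hε₀
  gcongr

theorem one_add_mul_sub_one_le_rpow_of_neg {x p : ℝ} (hx : 0 < x) (hp : p < 0) :
    1 + p * (x - 1) ≤ x ^ p := by
  have hlog := mul_le_mul_of_nonpos_left (Real.log_le_sub_one_of_pos hx) hp.le
  have hexp := Real.add_one_le_exp (Real.log x * p)
  rw [Real.rpow_def_of_pos hx]
  linarith

theorem mul_rpow_sub_rpow_le_sub {x₀ x p : ℝ} (hx₀ : 0 < x₀) (hx : 0 < x) (hp : p < 0) :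
    x₀ ^ (1 - p) / p * (x ^ p - x₀ ^ p) ≤ x - x₀ := by
  have hbern := one_add_mul_sub_one_le_rpow_of_neg (div_pos hx hx₀) hp
  rw [Real.div_rpow hx.le hx₀.le, le_div_iff₀ (by positivity)] at hbern
  calc x₀ ^ (1 - p) / p * (x ^ p - x₀ ^ p)
      ≤ x₀ ^ (1 - p) / p * ((1 + p * (x / x₀ - 1)) * x₀ ^ p - x₀ ^ p) :=
        mul_le_mul_of_nonpos_left (by linarith)
          (div_nonpos_of_nonneg_of_nonpos (by positivity) hp.le)
    _ = x - x₀ := by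
      rw [Real.rpow_sub hx₀, Real.rpow_one]
      have := hp.ne
      field_simp
      ring

theorem mul_toReal_rpow_sub_rpow_le_sub {x₀ p : ℝ} (hx₀ : 0 < x₀) (hp : p < 0) {t : ℝ≥0∞}
    (ht : t ≠ 0) :
    ((x₀ ^ (1 - p) / p * ((t ^ p).toReal - x₀ ^ p) : ℝ) : EReal) ≤ t - x₀ := by
  induction t with
  | top => simp
  | coe t =>
    have ht' : 0 < (t : ℝ) := NNReal.coe_pos.2 (pos_iff_ne_zero.2 (ENNReal.coe_ne_zero.1 ht))
    rw [← ENNReal.toReal_rpow, ENNReal.coe_toReal]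
    exact EReal.coe_le_coe (mul_rpow_sub_rpow_le_sub hx₀ ht' hp)

theorem tendsto_of_tendsto_sub_div {J : ℝ → ℝ} {J₀ σ : ℝ}
    (hσ : Tendsto (fun ε => (J ε - J₀) / ε) (𝓝[>] 0) (𝓝 σ)) :
    Tendsto J (𝓝[>] 0) (𝓝 J₀) := by
  have hid : Tendsto (fun ε : ℝ => ε) (𝓝[>] 0) (𝓝 0) := nhdsWithin_le_nhds
  have hlim := (hid.mul hσ).add_const J₀
  rw [zero_mul, zero_add] at hlim
  refine hlim.congr' ?_
  filter_upwards [self_mem_nhdsWithin] with ε hε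
  rw [mul_div_cancel₀ _ (ne_of_gt hε), sub_add_cancel]

theorem tendsto_sub_div_of_tendsto_rpow_sub_div {x₀ p : ℝ} (hx₀ : 0 < x₀) (hp : p ≠ 0)
    {x : ℝ → ℝ} (hx : ∀ᶠ ε in 𝓝[>] 0, 0 ≤ x ε) {σ : ℝ}
    (hσ : Tendsto (fun ε => (x ε ^ p - x₀ ^ p) / ε) (𝓝[>] 0) (𝓝 σ)) :
    Tendsto (fun ε => (x ε - x₀) / ε) (𝓝[>] 0) (𝓝 (x₀ ^ (1 - p) / p * σ)) := by
  have hJ₀ : 0 < x₀ ^ p := by positivity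
  have hderiv : HasDerivAt (fun t : ℝ => t ^ p⁻¹) (x₀ ^ (1 - p) / p) (x₀ ^ p) := by
    convert Real.hasDerivAt_rpow_const (p := p⁻¹) (Or.inl hJ₀.ne') using 1
    rw [← Real.rpow_mul hx₀.le, mul_sub, mul_inv_cancel₀ hp, mul_one, div_eq_inv_mul]
  have hdslope := (continuousAt_dslope_same.2 hderiv.differentiableAt).tendsto.comp
    (tendsto_of_tendsto_sub_div hσ)
  rw [dslope_same, hderiv.deriv] at hdslope
  refine (hdslope.mul hσ).congr' ?_
  filter_upwards [hx] with ε hε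
  rw [Function.comp_apply, mul_div_assoc', mul_comm, ← smul_eq_mul, sub_smul_dslope,
    Real.rpow_rpow_inv hε hp, Real.rpow_rpow_inv hx₀.le hp]

theorem tendsto_inv_mul_sub_of_tendsto_rpow_sub_div {x₀ p : ℝ} (hx₀ : 0 < x₀) (hp : p < 0)
    {I : ℝ → ℝ≥0∞} (hI : ∀ᶠ ε in 𝓝[>] 0, I ε ≠ 0) {σ : EReal} (hσ_top : σ ≠ ⊤)
    (hσ : Tendsto (fun ε => ((((I ε ^ p).toReal - x₀ ^ p) / ε : ℝ) : EReal)) (𝓝[>] 0) (𝓝 σ)) :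
    Tendsto (fun ε : ℝ => ((ε⁻¹ : ℝ) : EReal) * ((I ε : EReal) - x₀)) (𝓝[>] 0)
      (𝓝 ((x₀ ^ (1 - p) / p : ℝ) * σ)) := by
  have hc : x₀ ^ (1 - p) / p < 0 := div_neg_of_pos_of_neg (by positivity) hp
  induction σ with
  | top => exact absurd rfl hσ_top
  | bot =>
    -- `t ↦ t ^ (1 / p)` lies above its tangent at `x₀ ^ p`, so the slope of `I` is at least
    -- `x₀ ^ (1 - p) / p` times that of `I ^ p`.
    rw [EReal.coe_mul_bot_of_neg hc]
    have hlower := EReal.tendsto_coe_nhds_top_iff.2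
      ((EReal.tendsto_coe_nhds_bot_iff.1 hσ).const_mul_atBot_of_neg hc)
    refine tendsto_nhds_top_mono hlower ?_
    filter_upwards [hI, self_mem_nhdsWithin] with ε hε hε₀
    have hε₀ : 0 < ε := hε₀
    calc ((x₀ ^ (1 - p) / p * (((I ε ^ p).toReal - x₀ ^ p) / ε) : ℝ) : EReal)
        = (ε⁻¹ : ℝ) * (x₀ ^ (1 - p) / p * ((I ε ^ p).toReal - x₀ ^ p) : ℝ) := by
          rw [← EReal.coe_mul]
          congr 1
          ring
      _ ≤ (ε⁻¹ : ℝ) * ((I ε : EReal) - x₀) :=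
          mul_le_mul_of_nonneg_left (mul_toReal_rpow_sub_rpow_le_sub hx₀ hp hε)
            (EReal.coe_nonneg.2 (inv_nonneg.2 hε₀.le))
  | coe σ =>
    have hσ' := EReal.tendsto_coe.1 hσ
    simp only [← ENNReal.toReal_rpow] at hσ'
    have hfin : ∀ᶠ ε in 𝓝[>] 0, I ε ≠ ⊤ := by
      have hJ₀ : x₀ ^ p ≠ 0 := by positivity
      filter_upwards [(tendsto_of_tendsto_sub_div hσ').eventually_ne hJ₀] with ε hε hI_top
      exact hε (by rw [hI_top, ENNReal.toReal_top, Real.zero_rpow hp.ne])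
    rw [← EReal.coe_mul]
    refine ((continuous_coe_real_ereal.tendsto _).comp (tendsto_sub_div_of_tendsto_rpow_sub_div hx₀
      hp.ne (Eventually.of_forall fun _ => ENNReal.toReal_nonneg) hσ')).congr' ?_
    filter_upwards [hfin] with ε hε
    rw [Function.comp_apply, div_eq_inv_mul, EReal.coe_mul, EReal.coe_sub,
      EReal.coe_ennreal_toReal hε]

theorem exists_tendsto_inv_mul_sub_of_rpow_le {x₀ p : ℝ} (hx₀ : 0 < x₀) (hp : p < 0)
    {I : ℝ → ℝ≥0∞} {R : ℝ → ℝ} {R' : ℝ}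
    (hconv : ∀ δ ∈ Set.Ioo (0 : ℝ) 1, ∀ l ∈ Set.Ioo (0 : ℝ) 1,
      I (l * δ) ^ p ≤ ENNReal.ofReal (1 - l) * ENNReal.ofReal x₀ ^ p + ENNReal.ofReal l * I δ ^ p)
    (hle : ∀ ε ∈ Set.Ioo (0 : ℝ) 1, I ε ^ p ≤ ENNReal.ofReal (R ε)) (hR₀ : R 0 = x₀ ^ p)
    (hR : HasDerivWithinAt R R' (Set.Ioi 0) 0) :
    ∃ L : EReal, Tendsto (fun ε : ℝ => ((ε⁻¹ : ℝ) : EReal) * ((I ε : EReal) - x₀)) (𝓝[>] 0) (𝓝 L) ∧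
      ((x₀ ^ (1 - p) / p * R' : ℝ) : EReal) ≤ L := by
  have hfin : ∀ ε ∈ Set.Ioo (0 : ℝ) 1, I ε ^ p ≠ ⊤ := fun ε hε =>
    ne_top_of_le_ne_top ENNReal.ofReal_ne_top (hle ε hε)
  have hIoo : ∀ᶠ ε : ℝ in 𝓝[>] 0, ε ∈ Set.Ioo (0 : ℝ) 1 := Ioo_mem_nhdsGT one_pos
  have hne : ∀ᶠ ε in 𝓝[>] 0, I ε ≠ 0 := hIoo.mono fun ε hε hI =>
    hfin ε hε (hI ▸ ENNReal.zero_rpow_of_neg hp)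
  have hR_pos : ∀ᶠ ε in 𝓝[>] 0, 0 < R ε :=
    hR.continuousWithinAt.eventually (lt_mem_nhds (hR₀ ▸ Real.rpow_pos_of_pos hx₀ p))
  have hconv' : ∀ δ ∈ Set.Ioo (0 : ℝ) 1, ∀ l ∈ Set.Ioo (0 : ℝ) 1,
      (I (l * δ) ^ p).toReal ≤ (1 - l) * R 0 + l * (I δ ^ p).toReal := fun δ hδ l hl => by
    have hl₀ : 0 ≤ l := hl.1.le
    have hl₁ : 0 ≤ 1 - l := sub_nonneg.2 hl.2.le
    rw [hR₀]
    refine ENNReal.toReal_le_of_le_ofReal (by positivity) ?_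
    rw [ENNReal.ofReal_add (by positivity) (by positivity), ENNReal.ofReal_mul hl₁,
      ENNReal.ofReal_mul hl₀, ENNReal.ofReal_toReal (hfin δ hδ), ← ENNReal.ofReal_rpow_of_pos hx₀]
    exact hconv δ hδ l hl
  have hle' : ∀ᶠ ε in 𝓝[>] 0, (I ε ^ p).toReal ≤ R ε := by
    filter_upwards [hIoo, hR_pos] with ε hε hpos
    exact ENNReal.toReal_le_of_le_ofReal hpos.le (hle ε hε)
  obtain ⟨σ, hσ, hσR⟩ := exists_tendsto_sub_div_le hconv' hle' hR
  rw [hR₀] at hσ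
  refine ⟨_, tendsto_inv_mul_sub_of_tendsto_rpow_sub_div hx₀ hp hne
    (ne_top_of_le_ne_top (EReal.coe_ne_top _) hσR) hσ, ?_⟩
  have hc : x₀ ^ (1 - p) / p ≤ 0 := div_nonpos_of_nonneg_of_nonpos (by positivity) hp.le
  rw [EReal.coe_mul, mul_comm _ σ, mul_comm _ (R' : EReal)]
  exact EReal.mul_le_mul_of_nonpos_right hσR (EReal.coe_nonpos.2 hc)

end OneSidedDerivative

section MeanWidth

variable {n : ℕ} {α β κ : ℝ} {f : EuclideanSpace ℝ (Fin n) → ℝ}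

theorem one_add_mul_pos_of_lt (hnβ : n < β) (hα : α = -1 / β) : 0 < 1 + n * α := by
  have := (div_lt_one ((Nat.cast_nonneg n).trans_lt hnβ)).2 hnβ
  rw [hα, mul_div_assoc', mul_neg_one, neg_div]
  linarith

theorem widthDiff_eq_lintegral_sub_integral (hnβ : n < β) (ε : ℝ) :
    widthDiff n β f ε = ((∫⁻ x, alphaPerturbation β f ε x : ℝ≥0∞) : EReal) -
      (∫ x : EuclideanSpace ℝ (Fin n), alphaGaussian β x : ℝ) := by
  have hnβ' : Module.finrank ℝ (EuclideanSpace ℝ (Fin n)) < β := by simpa using hnβ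
  rw [← max_eq_left (integral_alphaGaussian_pos volume hnβ').le, ← EReal.coe_ennreal_ofReal,
    ← lintegral_alphaGaussian volume hnβ']
  rfl

theorem toNNReal_one_sub_add_toNNReal {t : ℝ} (ht : t ∈ Set.Ioo (0 : ℝ) 1) :
    (1 - t).toNNReal + t.toNNReal = 1 := by
  rw [← Real.toNNReal_add (sub_nonneg.2 ht.2.le) ht.1.le, sub_add_cancel, Real.toNNReal_one]

theorem lintegral_alphaPerturbation_mul_rpow_le (hnβ : n < β) (hα : α = -1 / β)
    (hκ : κ = α / (1 + n * α)) (hf : ∀ x, 0 ≤ f x) {δ l : ℝ} (hδ : δ ∈ Set.Ioo (0 : ℝ) 1)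
    (hl : l ∈ Set.Ioo (0 : ℝ) 1) :
    (∫⁻ x, alphaPerturbation β f (l * δ) x) ^ κ ≤
      ENNReal.ofReal (1 - l) *
          ENNReal.ofReal (∫ x : EuclideanSpace ℝ (Fin n), alphaGaussian β x) ^ κ +
        ENNReal.ofReal l * (∫⁻ x, alphaPerturbation β f δ x) ^ κ := by
  have hβ : 0 < β := (Nat.cast_nonneg n).trans_lt hnβ
  have hdim := one_add_mul_pos_of_lt hnβ hα
  have hα_neg : α < 0 := hα ▸ div_neg_of_neg_of_pos (by norm_num) hβ
  have hne {t : ℝ} (ht : 0 < t) : t.toNNReal ≠ 0 := (Real.toNNReal_pos.2 ht).ne'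
  have hlδ : l * δ ∈ Set.Ioo (0 : ℝ) 1 :=
    ⟨mul_pos hl.1 hδ.1, mul_lt_one_of_nonneg_of_lt_one_left hl.1.le hl.2 hδ.2.le⟩
  have hmeas : Measurable (alphaPerturbation β f (l * δ)) := by
    have := measurable_alphaPerturbation hβ (toNNReal_one_sub_add_toNNReal hlδ)
      (hne (sub_pos.2 hlδ.2)) (hne hlδ.1) hf
    rwa [Real.coe_toNNReal _ hlδ.1.le] at this
  have hbbl := borell_brascamp_lieb (E := EuclideanSpace ℝ (Fin n)) volume
    (hne (sub_pos.2 hl.2)) (hne hl.1) hα_neg (by simpa using hdim) hmeas fun x y => by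
      have := alphaPerturbation_mul_smul_add_smul_rpow_le hβ (toNNReal_one_sub_add_toNNReal hl)
        (toNNReal_one_sub_add_toNNReal hδ) (hne (sub_pos.2 hl.2)) (hne hl.1) (hne (sub_pos.2 hδ.2))
        (hne hδ.1) hf x y
      rwa [Real.coe_toNNReal _ hl.1.le, Real.coe_toNNReal _ hδ.1.le, ← hα] at this
  rwa [lintegral_alphaGaussian volume (by simpa using hnβ), finrank_euclideanSpace_fin,
    ← hκ] at hbbl

theorem ofReal_mul_rpow_add_ofReal_mul_rpow {a b I₀ I₁ s κ : ℝ} (ha : 0 < a) (hb : 0 ≤ b)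
    (hI₀ : 0 < I₀) (hI₁ : 0 < I₁) :
    ENNReal.ofReal a * (ENNReal.ofReal (a ^ s) * ENNReal.ofReal I₀) ^ κ +
        ENNReal.ofReal b * ENNReal.ofReal I₁ ^ κ =
      ENNReal.ofReal (a ^ (1 + s * κ) * I₀ ^ κ + b * I₁ ^ κ) := by
  rw [← ENNReal.ofReal_mul (by positivity), ENNReal.ofReal_rpow_of_pos (by positivity),
    ENNReal.ofReal_rpow_of_pos hI₁, ← ENNReal.ofReal_mul ha.le, ← ENNReal.ofReal_mul hb,
    ← ENNReal.ofReal_add (by positivity) (by positivity), Real.mul_rpow (by positivity) hI₀.le,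
    ← Real.rpow_mul ha.le, ← mul_assoc, Real.rpow_add ha, Real.rpow_one]

theorem lintegral_alphaPerturbation_rpow_le (hnβ : n < β) (hα : α = -1 / β)
    (hκ : κ = α / (1 + n * α)) (hf : ∀ x, 0 ≤ f x) (hfi : Integrable f)
    (hf₀ : 0 < ∫ x, f x) {ε : ℝ} (hε : ε ∈ Set.Ioo (0 : ℝ) 1) :
    (∫⁻ x, alphaPerturbation β f ε x) ^ κ ≤
      ENNReal.ofReal ((1 - ε) ^ (1 + -(n : ℝ) / 2 * κ) *
          (∫ x : EuclideanSpace ℝ (Fin n), alphaGaussian β x) ^ κ + ε * (∫ x, f x) ^ κ) := by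
  have hnβ' : Module.finrank ℝ (EuclideanSpace ℝ (Fin n)) < β := by simpa using hnβ
  have hβ : 0 < β := (Nat.cast_nonneg n).trans_lt hnβ
  have hdim := one_add_mul_pos_of_lt hnβ hα
  have hα_neg : α < 0 := hα ▸ div_neg_of_neg_of_pos (by norm_num) hβ
  have hsum := toNNReal_one_sub_add_toNNReal hε
  have ha : (1 - ε).toNNReal ≠ 0 := (Real.toNNReal_pos.2 (sub_pos.2 hε.2)).ne'
  have hb : ε.toNNReal ≠ 0 := (Real.toNNReal_pos.2 hε.1).ne'
  have hmeas := measurable_alphaPerturbation hβ hsum ha hb hf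
  have hbbl := borell_brascamp_lieb (E := EuclideanSpace ℝ (Fin n)) volume ha hb hα_neg
    (by simpa using hdim) hmeas fun x y =>
      hα ▸ alphaPerturbation_smul_add_smul_rpow_le hβ hsum ha hb hf x y
  rwa [Real.coe_toNNReal _ hε.1.le, Real.coe_toNNReal _ (sub_nonneg.2 hε.2.le),
    lintegral_comp_sqrt_smul volume (fun x => ENNReal.ofReal (alphaGaussian β x))
      (sub_pos.2 hε.2), lintegral_alphaGaussian volume hnβ', finrank_euclideanSpace_fin, ← hκ,
    ← ofReal_integral_eq_lintegral_ofReal hfi (Eventually.of_forall hf),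
    ← ENNReal.ofReal, ← ENNReal.ofReal, ofReal_mul_rpow_add_ofReal_mul_rpow (sub_pos.2 hε.2)
      hε.1.le (integral_alphaGaussian_pos volume hnβ') hf₀] at hbbl

theorem hasDerivAt_one_sub_rpow_mul_add_mul (q A B : ℝ) :
    HasDerivAt (fun ε : ℝ => (1 - ε) ^ q * A + ε * B) (B - q * A) 0 := by
  have hpow := (((hasDerivAt_id (0 : ℝ)).const_sub 1).rpow_const (p := q)
    (Or.inl (by norm_num))).mul_const A
  refine (hpow.add ((hasDerivAt_id (0 : ℝ)).mul_const B)).congr_deriv ?_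
  simp only [id_eq, sub_zero, Real.one_rpow]
  ring

theorem rpow_one_sub_div_mul_rpow_sub {I₀ I₁ κ : ℝ} (hI₀ : 0 < I₀) (hI₁ : 0 ≤ I₁) (hκ : κ ≠ 0)
    (s : ℝ) :
    I₀ ^ (1 - κ) / κ * (I₁ ^ κ - (1 + s * κ) * I₀ ^ κ) =
      I₀ * (-s + 1 / κ * ((I₁ / I₀) ^ κ - 1)) := by
  rw [Real.div_rpow hI₁ hI₀.le, Real.rpow_sub hI₀, Real.rpow_one]
  field_simp
  ring

end MeanWidth

theorem stmt_16_general {n : ℕ} (α β κ : ℝ) (hdim : 0 < 1 + n * α) (hα : α < 0)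
    (hβ : β = -1 / α) (hκ : κ = α / (1 + n * α))
    (f : EuclideanSpace ℝ (Fin n) → ℝ) (hf : ∀ x, 0 ≤ f x)
    (hfi : Integrable f) (hf0 : 0 < ∫ x, f x) :
    ∃ L : EReal,
      Tendsto (fun ε : ℝ => ((ε⁻¹ : ℝ) : EReal) * widthDiff n β f ε) (𝓝[>] 0) (𝓝 L) ∧
      (((∫ x : EuclideanSpace ℝ (Fin n), (1 + ‖x‖ ^ 2 / (2 * β)) ^ (-β)) *
          ((n : ℝ) / 2 + (1 / κ) *
            (((∫ x, f x) / ∫ x : EuclideanSpace ℝ (Fin n), (1 + ‖x‖ ^ 2 / (2 * β)) ^ (-β)) ^ κ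
              - 1)) : ℝ) : EReal) ≤ L := by
  have hα' : α = -1 / β := by rw [hβ, div_div_cancel₀ (by norm_num)]
  have hnβ : n < β := by
    rw [hβ, lt_div_iff_of_neg hα]
    linarith
  have hκ_neg : κ < 0 := hκ ▸ div_neg_of_neg_of_pos hα hdim
  have hI₀ : 0 < ∫ x : EuclideanSpace ℝ (Fin n), alphaGaussian β x :=
    integral_alphaGaussian_pos volume (by simpa using hnβ)
  have hR₀ : (1 - (0 : ℝ)) ^ (1 + -(n : ℝ) / 2 * κ) *
      (∫ x : EuclideanSpace ℝ (Fin n), alphaGaussian β x) ^ κ + 0 * (∫ x, f x) ^ κ =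
        (∫ x : EuclideanSpace ℝ (Fin n), alphaGaussian β x) ^ κ := by
    simp
  obtain ⟨L, hL, hle⟩ := exists_tendsto_inv_mul_sub_of_rpow_le
    (I := fun ε => ∫⁻ x, alphaPerturbation β f ε x) hI₀ hκ_neg
    (fun δ hδ l hl => lintegral_alphaPerturbation_mul_rpow_le hnβ hα' hκ hf hδ hl)
    (fun ε hε => lintegral_alphaPerturbation_rpow_le hnβ hα' hκ hf hfi hf0 hε)
    hR₀ (hasDerivAt_one_sub_rpow_mul_add_mul _ _ _).hasDerivWithinAt
  rw [rpow_one_sub_div_mul_rpow_sub hI₀ hf0.le hκ_neg.ne, neg_div, neg_neg] at hle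
  exact ⟨L, hL.congr fun ε => by rw [widthDiff_eq_lintegral_sub_integral hnβ], hle⟩

theorem stmt_16 {n : ℕ} (hn : 1 ≤ n) (α β κ : ℝ) (hα1 : -1 / (n : ℝ) < α) (hα2 : α < 0)
    (hβ : β = -1 / α) (hκ : κ = α / (1 + n * α))
    (f : EuclideanSpace ℝ (Fin n) → ℝ) (hf : f ∈ CAlpha n α)
    (hfi : Integrable f) (hf0 : 0 < ∫ x, f x) :
    ∃ L : EReal,
      Tendsto (fun ε : ℝ => ((ε⁻¹ : ℝ) : EReal) * widthDiff n β f ε) (𝓝[>] 0) (𝓝 L) ∧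
      (((∫ x : EuclideanSpace ℝ (Fin n), (1 + ‖x‖ ^ 2 / (2 * β)) ^ (-β)) *
          ((n : ℝ) / 2 + (1 / κ) *
            (((∫ x, f x) / ∫ x : EuclideanSpace ℝ (Fin n), (1 + ‖x‖ ^ 2 / (2 * β)) ^ (-β)) ^ κ
              - 1)) : ℝ) : EReal) ≤ L := by
  have hdim : 0 < 1 + n * α := by linarith [(div_lt_iff₀ (Nat.cast_pos.2 hn)).1 hα1]
  exact stmt_16_general α β κ hdim hα2 hβ hκ f hf.1 hfi hf0
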